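/- If Λ² > ζ², the limiting loss density f(x) = (ζ/|Λ|)·φ((ζ·Φ⁻¹(x) − Σ·Φ⁻¹(p))/|Λ|)/φ(Φ⁻¹(x)) diverges at both endpoints: f(x) → ∞ as x → 0⁺ and f(x) → ∞ as x → 1⁻ (so the density is bimodal). -/

import Mathlib

open MeasureTheory ProbabilityTheory Real Filter Set

/-- The density of the standard normal distribution. -/
noncomputable def stdPdf (y : ℝ) : ℝ := Real.exp (-y ^ 2 / 2) / Real.sqrt (2 * Real.pi)

/-- The cumulative distribution function `Φ` of the standard normal distribution. -/
noncomputable def stdCdf (x : ℝ) : ℝ := ∫ y in Set.Iic x, stdPdf y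

/-- The inverse `Φ⁻¹` of the standard normal cumulative distribution function: since `stdCdf`
is injective, `stdCdfInv` is the genuine inverse of `Φ` on `(0,1)`. -/
noncomputable def stdCdfInv : ℝ → ℝ := Function.invFun stdCdf

lemma stdPdf_eq : stdPdf = gaussianPDFReal 0 1 := by
  ext y
  simp only [stdPdf, gaussianPDFReal]
  simp [div_eq_mul_inv, mul_comm]

lemma stdPdf_pos (y : ℝ) : 0 < stdPdf y := by
  unfold stdPdf; positivity

lemma stdPdf_cont : Continuous stdPdf := by
  unfold stdPdf; fun_prop

lemma stdPdf_int : Integrable stdPdf := by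
  rw [stdPdf_eq]; exact integrable_gaussianPDFReal 0 1

lemma stdCdf_eq : stdCdf = fun x => cdf (gaussianReal 0 1) x := by
  ext x
  rw [cdf_eq_real, measureReal_def, gaussianReal_apply_eq_integral _ (by norm_num),
    ENNReal.toReal_ofReal]
  · simp only [stdCdf, stdPdf_eq]
  · exact integral_nonneg fun y => gaussianPDFReal_nonneg 0 1 y

lemma stdCdf_sub (a b : ℝ) : stdCdf b - stdCdf a = ∫ y in a..b, stdPdf y :=
  intervalIntegral.integral_Iic_sub_Iic stdPdf_int.integrableOn stdPdf_int.integrableOn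

lemma stdCdf_strictMono : StrictMono stdCdf := by
  intro a b hab
  have := stdCdf_sub a b
  have h : 0 < ∫ y in a..b, stdPdf y :=
    intervalIntegral.intervalIntegral_pos_of_pos (stdPdf_cont.intervalIntegrable a b)
      stdPdf_pos hab
  linarith

lemma stdCdf_cont : Continuous stdCdf := by
  have : stdCdf = fun x => stdCdf 0 + ∫ y in (0:ℝ)..x, stdPdf y := by
    ext x; rw [← stdCdf_sub]; ring
  rw [this]
  exact continuous_const.add
    (intervalIntegral.continuous_primitive (fun a b => stdPdf_cont.intervalIntegrable a b) 0)

lemma stdCdf_bot : Tendsto stdCdf atBot (nhds 0) := by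
  rw [stdCdf_eq]; exact tendsto_cdf_atBot _

lemma stdCdf_top : Tendsto stdCdf atTop (nhds 1) := by
  rw [stdCdf_eq]; exact tendsto_cdf_atTop _

lemma stdCdf_pos (x : ℝ) : 0 < stdCdf x := by
  have h1 : 0 ≤ stdCdf (x - 1) := by rw [stdCdf_eq]; exact cdf_nonneg _ _
  have := stdCdf_strictMono (show x - 1 < x by linarith)
  linarith

lemma stdCdf_lt_one (x : ℝ) : stdCdf x < 1 := by
  have h1 : stdCdf (x + 1) ≤ 1 := by rw [stdCdf_eq]; exact cdf_le_one _ _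
  have := stdCdf_strictMono (show x < x + 1 by linarith)
  linarith

lemma stdCdf_inv {x : ℝ} (hx : x ∈ Set.Ioo (0 : ℝ) 1) : stdCdf (stdCdfInv x) = x := by
  apply Function.invFun_eq
  obtain ⟨a, ha⟩ := (stdCdf_bot.eventually (gt_mem_nhds hx.1)).exists
  obtain ⟨b, hb⟩ := (stdCdf_top.eventually (lt_mem_nhds hx.2)).exists
  exact mem_range_of_exists_le_of_exists_ge stdCdf_cont ⟨a, ha.le⟩ ⟨b, hb.le⟩

lemma stdCdfInv_zero : Tendsto stdCdfInv (nhdsWithin 0 (Set.Ioo 0 1)) atBot := by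
  rw [tendsto_atBot]
  intro b
  filter_upwards [self_mem_nhdsWithin, nhdsWithin_le_nhds (gt_mem_nhds (stdCdf_pos b))]
    with x hx hb
  rw [← stdCdf_strictMono.le_iff_le, stdCdf_inv hx]
  exact le_of_lt hb

lemma stdCdfInv_one : Tendsto stdCdfInv (nhdsWithin 1 (Set.Ioo 0 1)) atTop := by
  rw [tendsto_atTop]
  intro b
  filter_upwards [self_mem_nhdsWithin, nhdsWithin_le_nhds (lt_mem_nhds (stdCdf_lt_one b))]
    with x hx hb
  rw [← stdCdf_strictMono.le_iff_le, stdCdf_inv hx]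
  exact le_of_lt hb

/-- if `Λ² > ζ²`, the limiting loss density diverges to `+∞` at both endpoints
of `(0,1)` (so the density is bimodal). -/
theorem limiting_density_bimodal
    (Sg ζ Λ p : ℝ)
    (hSg : 0 < Sg) (hζ : 0 < ζ) (hΛ : Λ ≠ 0) (hp : p ∈ Set.Ioo (0 : ℝ) 1)
    (f : ℝ → ℝ)
    (hf : ∀ x ∈ Set.Ioo (0 : ℝ) 1,
      f x = (ζ / |Λ|) * stdPdf ((ζ * stdCdfInv x - Sg * stdCdfInv p) / |Λ|)
              / stdPdf (stdCdfInv x))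
    (hcase : ζ ^ 2 < Λ ^ 2) :
    Filter.Tendsto f (nhdsWithin 0 (Set.Ioo 0 1)) Filter.atTop ∧
    Filter.Tendsto f (nhdsWithin 1 (Set.Ioo 0 1)) Filter.atTop := by
  have hL : 0 < |Λ| := abs_pos.mpr hΛ
  have hL2 : |Λ| ^ 2 = Λ ^ 2 := sq_abs Λ
  set L := |Λ| with hLdef
  set c := Sg * stdCdfInv p with hc
  have ha : 0 < (1 - ζ ^ 2 / L ^ 2) / 2 := by
    have : ζ ^ 2 / L ^ 2 < 1 := by rw [div_lt_one (by positivity), hL2]; exact hcase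
    linarith
  set a := (1 - ζ ^ 2 / L ^ 2) / 2 with hadef
  set b := ζ * c / L ^ 2 with hb
  have key : ∀ x ∈ Set.Ioo (0 : ℝ) 1, (ζ / L) * Real.exp
      (stdCdfInv x * (a * stdCdfInv x + b) + -(c ^ 2 / L ^ 2 / 2)) = f x := by
    intro x hx
    rw [hf x hx]
    generalize stdCdfInv x = y
    have he : y * (a * y + b) + -(c ^ 2 / L ^ 2 / 2)
        = -((ζ * y - c) / L) ^ 2 / 2 - (-y ^ 2 / 2) := by
      rw [hadef, hb]; field_simp; ring
    rw [he, Real.exp_sub]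
    unfold stdPdf
    have : 0 < Real.sqrt (2 * Real.pi) := by positivity
    field_simp
  have hζL : 0 < ζ / L := by positivity
  constructor
  · have h := stdCdfInv_zero
    refine Tendsto.congr' (eventually_nhdsWithin_of_forall key) ?_
    refine Tendsto.const_mul_atTop hζL (Real.tendsto_exp_atTop.comp ?_)
    exact tendsto_atTop_add_const_right _ _
      (h.atBot_mul_atBot₀ (tendsto_atBot_add_const_right _ _ (h.const_mul_atBot ha)))
  · have h := stdCdfInv_one
    refine Tendsto.congr' (eventually_nhdsWithin_of_forall key) ?_
    refine Tendsto.const_mul_atTop hζL (Real.tendsto_exp_atTop.comp ?_)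
    exact tendsto_atTop_add_const_right _ _
      (h.atTop_mul_atTop₀ (tendsto_atTop_add_const_right _ _ (h.const_mul_atTop ha)))
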